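/- Let 𝒵 be a countable nonempty set and let Z = (Z₁,…,Z_{n+1}) be a random vector in 𝒵^{n+1} whose probability mass function f is leave-one-out exchangeable with factorization f(z₁,…,z_{n+1}) = g({z₁,…,z_{n+1}}) · h̄({z₁,…,z_n}, z_{n+1}). Let s be a fixed function taking an element of 𝒵 and a multiset of n elements of 𝒵 to a real number, set V_i := s(Z_i, Z_{-i}) where Z_{-i} = {Z₁,…,Z_{n+1}} ∖ {Z_i} (as a multiset), and assume V₁,…,V_{n+1} are almost surely pairwise distinct, with Σ_{j=1}^{n+1} h̄(Z_{-j}, Z_j) > 0 almost surely. Define p_i(Z₁,…,Z_{n+1}) := h̄(Z_{-i}, Z_i) / Σ_{j=1}^{n+1} h̄(Z_{-j}, Z_j). Then for every β ∈ (0,1): P( V_{n+1} ≤ Q(β; Σ_{i=1}^{n} p_i(Z₁,…,Z_{n+1}) δ_{V_i} + p_{n+1}(Z₁,…,Z_{n+1}) δ_∞) ) ≥ β. -/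

import Mathlib

/-!
Write `h_k(y) = h̄(y_{-k}, y_k)`, `V_k(y) = s(y_k, y_{-k})`. Both are equivariant under
permutations of the coordinates, and the swap `τ_k` of `k` with the last index satisfies
`f(y ∘ τ_k) = g(y) h_k(y)`. Put `W_k(y) = Σ_{i : V_i(y) < V_k(y)} p_i(y)`, so that
`W_last(y ∘ τ_k) = W_k(y)`. The event of the theorem contains `E = {W_last(Z) < β}`
(`le_wQuantile_of_weight_lt`). Summing the pmf over all `y` after reindexing by each `τ_k` gives
`(n+1) P(E) = Σ_y Σ_k f(y ∘ τ_k) 1{W_k(y) < β}`, and the deterministic inequality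
`β Σ_k h_k ≤ Σ_k h_k 1{W_k < β}` (`weight_below_level`) bounds this below by
`β Σ_y Σ_k f(y ∘ τ_k) = (n+1) β`.

The deterministic inequality holds with ties among the `V_k` as well, since `W_k` is defined by a
strict inequality, and it is trivial when all the weights vanish.
-/

open MeasureTheory ProbabilityTheory

/-- Weighted empirical quantile: `Q(β; Σ_j q_j δ_{v_j})` is the infimum (in `ℝ ∪ {+∞}`,
modeled by `EReal`) of the real numbers `s` such that the total weight of atoms
`v_j ≤ s` is at least `β`; the infimum of the empty set is `+∞`. -/
noncomputable def wQuantile {m : ℕ} (β : ℝ) (q : Fin m → ℝ) (v : Fin m → EReal) : EReal :=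
  sInf {x : EReal | ∃ s : ℝ, x = (s : EReal) ∧
    β ≤ ∑ j, q j * (if v j ≤ (s : EReal) then (1 : ℝ) else 0)}

/-- The indices whose strictly lower weight is below `β` carry a share at least `β` of the total
weight: they form a lower set for `v`, and if some index is left out then the indices strictly
below a `v`-minimal such index already carry a share `β`. -/
lemma weight_below_level {ι : Type*} [Fintype ι] (w v : ι → ℝ) (hw : ∀ i, 0 ≤ w i)
    {β : ℝ} (hβ : β ≤ 1) :
    β * ∑ k, w k ≤
      ∑ k, w k * (if ∑ i, w i / (∑ j, w j) * (if v i < v k then (1 : ℝ) else 0) < β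
        then 1 else 0) := by
  classical
  set S := ∑ j, w j with hS
  have hS0 : 0 ≤ S := Finset.sum_nonneg fun i _ => hw i
  set W : ι → ℝ := fun k => ∑ i, w i / S * (if v i < v k then (1 : ℝ) else 0) with hW
  change β * S ≤ ∑ k, w k * (if W k < β then 1 else 0)
  by_cases hall : ∀ k, W k < β
  · simp only [hall, if_true, mul_one]
    rw [← hS]
    nlinarith
  · push Not at hall
    obtain ⟨k₁, hk₁⟩ := hall
    obtain ⟨k₀, hk₀, hmin⟩ := Finset.exists_min_image
      (Finset.univ.filter fun k => β ≤ W k) v ⟨k₁, by simpa using hk₁⟩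
    simp only [Finset.mem_filter, Finset.mem_univ, true_and] at hk₀ hmin
    rcases hS0.eq_or_lt with h0 | hpos
    · rw [← h0, mul_zero]
      exact Finset.sum_nonneg fun k _ => mul_nonneg (hw k) (by split_ifs <;> norm_num)
    calc β * S ≤ W k₀ * S := by gcongr
      _ = ∑ i, w i * (if v i < v k₀ then (1 : ℝ) else 0) := by
        rw [hW, Finset.sum_mul]
        refine Finset.sum_congr rfl fun i _ => ?_
        field_simp
      _ ≤ _ := by
        refine Finset.sum_le_sum fun i _ => mul_le_mul_of_nonneg_left ?_ (hw i)
        by_cases hi : v i < v k₀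
        · have : W i < β := by
            by_contra hc
            exact absurd (hmin i (not_lt.mp hc)) (not_le.mpr hi)
          simp [hi, this]
        · rw [if_neg hi]
          split_ifs <;> norm_num

/-- A real value lies below the weighted quantile as soon as the atoms strictly below it have
weight less than `β`, the atom at the last index being moved to `+∞`. -/
lemma le_wQuantile_of_weight_lt {n : ℕ} {β : ℝ} (q v : Fin (n + 1) → ℝ) (hq : ∀ i, 0 ≤ q i)
    (hlt : ∑ i, q i * (if v i < v (Fin.last n) then (1 : ℝ) else 0) < β) :
    (v (Fin.last n) : EReal) ≤
      wQuantile β q (fun i => if i = Fin.last n then (⊤ : EReal) else (v i : EReal)) := by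
  refine le_sInf ?_
  rintro x ⟨t, rfl, ht⟩
  by_contra hc
  rw [EReal.coe_le_coe_iff, not_le] at hc
  refine absurd (ht.trans (Finset.sum_le_sum fun i _ => mul_le_mul_of_nonneg_left ?_ (hq i)))
    (not_le.mpr hlt)
  by_cases hi : i = Fin.last n
  · simp [hi]
  · simp only [hi, if_false, EReal.coe_le_coe_iff]
    by_cases hit : v i ≤ t
    · simp [hit, hit.trans_lt hc]
    · rw [if_neg hit]
      split_ifs <;> norm_num

lemma map_comp_perm_erase {ι α : Type*} [Fintype ι] [DecidableEq ι] (y : ι → α)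
    (σ : Equiv.Perm ι) (k : ι) :
    Multiset.map (y ∘ σ) ((Finset.univ.erase k).val) =
      Multiset.map y ((Finset.univ.erase (σ k)).val) := by
  rw [← Multiset.map_map]
  congr 1
  have : (Finset.univ.erase k).map σ.toEmbedding = Finset.univ.erase (σ k) := by
    rw [Finset.map_erase]
    simp
  rw [← this]
  rfl

lemma map_comp_perm_univ {ι α : Type*} [Fintype ι] (y : ι → α) (σ : Equiv.Perm ι) :
    Multiset.map (y ∘ σ) (Finset.univ : Finset ι).val =
      Multiset.map y (Finset.univ : Finset ι).val := by
  rw [← Multiset.map_map]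
  congr 1
  have : (Finset.univ : Finset ι).map σ.toEmbedding = Finset.univ := by simp
  conv_rhs => rw [← this]
  rfl

/-- quantile lemma under leave-one-out exchangeability: if the pmf `f` of
`Z = (Z₁,…,Z_{n+1})` factorizes as `f(z) = g({z₁,…,z_{n+1}}) · h̄({z₁,…,z_n}, z_{n+1})`,
`V_i := s(Z_i, Z_{-i})` are a.s. pairwise distinct, `Σ_j h̄(Z_{-j}, Z_j) > 0` a.s., and
`p_i(Z) := h̄(Z_{-i}, Z_i) / Σ_j h̄(Z_{-j}, Z_j)`, then for every `β ∈ (0,1)`,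
`P(V_{n+1} ≤ Q(β; Σ_{i≤n} p_i(Z) δ_{V_i} + p_{n+1}(Z) δ_∞)) ≥ β`. -/
theorem stmt4 {𝒵 : Type*} [Countable 𝒵] [Nonempty 𝒵] [MeasurableSpace 𝒵]
    [MeasurableSingletonClass 𝒵]
    {Ω : Type*} [MeasurableSpace Ω] (μ : Measure Ω) [IsProbabilityMeasure μ]
    (n : ℕ) (Z : Ω → (Fin (n + 1) → 𝒵)) (hZ : Measurable Z)
    (f : (Fin (n + 1) → 𝒵) → ℝ) (hf : ∀ a, (μ (Z ⁻¹' {a})).toReal = f a)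
    (g : Multiset 𝒵 → ℝ) (h : Multiset 𝒵 → 𝒵 → ℝ)
    (hg : ∀ M, 0 ≤ g M) (hh : ∀ M a, 0 ≤ h M a)
    (hfact : ∀ y : Fin (n + 1) → 𝒵,
      f y = g (Multiset.map y Finset.univ.val) *
        h (Multiset.map y ((Finset.univ.erase (Fin.last n)).val)) (y (Fin.last n)))
    (hpos : ∀ᵐ ω ∂μ,
      0 < ∑ j, h (Multiset.map (Z ω) ((Finset.univ.erase j).val)) (Z ω j))
    (s : 𝒵 → Multiset 𝒵 → ℝ) (V : Fin (n + 1) → Ω → ℝ)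
    (hV : ∀ i ω, V i ω = s (Z ω i) (Multiset.map (Z ω) ((Finset.univ.erase i).val)))
    (hdist : ∀ᵐ ω ∂μ, ∀ i j, i ≠ j → V i ω ≠ V j ω)
    (β : ℝ) (hβ : β ∈ Set.Ioo (0 : ℝ) 1) :
    β ≤ (μ {ω | (V (Fin.last n) ω : EReal) ≤
          wQuantile β
            (fun i => h (Multiset.map (Z ω) ((Finset.univ.erase i).val)) (Z ω i) /
              ∑ j, h (Multiset.map (Z ω) ((Finset.univ.erase j).val)) (Z ω j))
            (fun i => if i = Fin.last n then (⊤ : EReal) else (V i ω : EReal))}).toReal := by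
  classical
  obtain ⟨hβ0, hβ1⟩ := hβ
  let H : (Fin (n + 1) → 𝒵) → Fin (n + 1) → ℝ := fun y k =>
    h (Multiset.map y ((Finset.univ.erase k).val)) (y k)
  let U : (Fin (n + 1) → 𝒵) → Fin (n + 1) → ℝ := fun y k =>
    s (y k) (Multiset.map y ((Finset.univ.erase k).val))
  let W : (Fin (n + 1) → 𝒵) → Fin (n + 1) → ℝ := fun y k =>
    ∑ i, H y i / (∑ j, H y j) * (if U y i < U y k then (1 : ℝ) else 0)
  have hH0 : ∀ y k, 0 ≤ H y k := fun y k => hh _ _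
  have hHσ : ∀ y (σ : Equiv.Perm (Fin (n + 1))) k, H (y ∘ σ) k = H y (σ k) := by
    intro y σ k
    simp only [H]
    rw [map_comp_perm_erase, Function.comp_apply]
  have hUσ : ∀ y (σ : Equiv.Perm (Fin (n + 1))) k, U (y ∘ σ) k = U y (σ k) := by
    intro y σ k
    simp only [U]
    rw [map_comp_perm_erase, Function.comp_apply]
  have hWσ : ∀ y (σ : Equiv.Perm (Fin (n + 1))) k, W (y ∘ σ) k = W y (σ k) := by
    intro y σ k
    simp only [W, hHσ, hUσ]
    rw [Equiv.sum_comp σ (H y)]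
    exact Equiv.sum_comp σ fun i =>
      H y i / (∑ j, H y j) * (if U y i < U y (σ k) then (1 : ℝ) else 0)
  let τ : Fin (n + 1) → Equiv.Perm (Fin (n + 1)) := fun k => Equiv.swap k (Fin.last n)
  have hτ : ∀ k, τ k (Fin.last n) = k := fun k => Equiv.swap_apply_right _ _
  have hfτ : ∀ y k, f (y ∘ τ k) = g (Multiset.map y Finset.univ.val) * H y k := by
    intro y k
    rw [hfact, map_comp_perm_univ]
    have := hHσ y (τ k) (Fin.last n)
    rw [hτ] at this
    rw [← this]
  have hf0 : ∀ y, 0 ≤ f y := fun y => by rw [← hf]; exact ENNReal.toReal_nonneg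
  let E : Set (Fin (n + 1) → 𝒵) := {y | W y (Fin.last n) < β}
  -- The law of `Z` on subsets, as a sum of the pmf.
  have hsum : ∀ A : Set (Fin (n + 1) → 𝒵),
      μ (Z ⁻¹' A) = ∑' y, ENNReal.ofReal (f y * (if y ∈ A then 1 else 0)) := by
    intro A
    have hA : MeasurableSet A := A.to_countable.measurableSet
    rw [← Measure.map_apply hZ hA, ← Measure.tsum_indicator_apply_singleton _ _ hA]
    refine tsum_congr fun y => ?_
    by_cases hy : y ∈ A
    · rw [Set.indicator_of_mem hy, Measure.map_apply hZ (measurableSet_singleton y), ← hf]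
      simp [hy]
    · simp [hy]
  have hcard : ∀ F : (Fin (n + 1) → 𝒵) → ENNReal,
      ((n + 1 : ℕ) : ENNReal) * ∑' y, F y = ∑' y, ∑ k, F (y ∘ τ k) := by
    intro F
    rw [Summable.tsum_finsetSum fun _ _ => ENNReal.summable]
    have : ∀ k, ∑' y : Fin (n + 1) → 𝒵, F (y ∘ τ k) = ∑' y, F y := fun k =>
      ((τ k).symm.arrowCongr (Equiv.refl 𝒵)).tsum_eq F
    simp [this]
  have hpt : ∀ y, β * ∑ k, f (y ∘ τ k) ≤
      ∑ k, f (y ∘ τ k) * (if y ∘ τ k ∈ E then 1 else 0) := by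
    intro y
    have hE : ∀ k, (y ∘ τ k ∈ E) = (W y k < β) := by
      intro k
      simp only [E, Set.mem_ofPred_eq, hWσ, hτ]
    simp only [hfτ, hE, mul_assoc, ← Finset.mul_sum]
    rw [mul_left_comm]
    exact mul_le_mul_of_nonneg_left (weight_below_level (H y) (U y) (hH0 y) hβ1.le) (hg _)
  have hE : ENNReal.ofReal β ≤ μ (Z ⁻¹' E) := by
    have huniv := hsum Set.univ
    simp only [Set.preimage_univ, measure_univ, Set.mem_univ, if_true, mul_one] at huniv
    have key : ((n + 1 : ℕ) : ENNReal) * ENNReal.ofReal β ≤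
        ((n + 1 : ℕ) : ENNReal) * μ (Z ⁻¹' E) := by
      calc ((n + 1 : ℕ) : ENNReal) * ENNReal.ofReal β
          = ENNReal.ofReal β * (((n + 1 : ℕ) : ENNReal) * ∑' y, ENNReal.ofReal (f y)) := by
            rw [← huniv, mul_one, mul_comm]
        _ = ∑' y, ENNReal.ofReal (β * ∑ k, f (y ∘ τ k)) := by
            rw [hcard, ← ENNReal.tsum_mul_left]
            refine tsum_congr fun y => ?_
            rw [ENNReal.ofReal_mul hβ0.le, ENNReal.ofReal_sum_of_nonneg fun k _ => hf0 _]
        _ ≤ ∑' y, ENNReal.ofReal (∑ k, f (y ∘ τ k) * (if y ∘ τ k ∈ E then 1 else 0)) :=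
            ENNReal.tsum_le_tsum fun y => ENNReal.ofReal_le_ofReal (hpt y)
        _ = ((n + 1 : ℕ) : ENNReal) * μ (Z ⁻¹' E) := by
            rw [hsum, hcard]
            refine tsum_congr fun y => ?_
            rw [ENNReal.ofReal_sum_of_nonneg]
            exact fun k _ => mul_nonneg (hf0 _) (by split_ifs <;> norm_num)
    exact (ENNReal.mul_le_mul_iff_right (by simp) (ENNReal.natCast_ne_top _)).mp key
  rw [← ENNReal.ofReal_le_iff_le_toReal (measure_ne_top _ _)]
  refine hE.trans (measure_mono fun ω hω => ?_)
  have hVU : ∀ i, V i ω = U (Z ω) i := fun i => hV i ω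
  simp only [Set.mem_ofPred_eq, hVU]
  exact le_wQuantile_of_weight_lt _ (U (Z ω))
    (fun i => div_nonneg (hH0 _ _) (Finset.sum_nonneg fun j _ => hH0 _ _)) hω
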